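/- Let p be a prime, k a field of characteristic p, and m, n, N₁, N₂, B natural numbers. Consider the system of N₁ equations ∑_{j=1}^{N₂} f_{ij}·Y_j^(p^m) = h_i (for i = 1,…,N₁), where the f_{ij} and h_i are polynomials in k[x_1,…,x_n] of total degree at most B. If the system has a solution with all Y_j in the field of fractions k(x_1,…,x_n), then it has a solution y = (y_1,…,y_{N₂}) in k(x_1,…,x_n) such that every y_j can be written as a ratio of polynomials in k[x_1,…,x_n] of total degree at most (2·N₁²·(N₂+1)·C(B+n, n)·p^(m(n−1))·B)^(2^n), where C(B+n, n) is the binomial coefficient. -/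

import Mathlib

/-!
Put `q = p ^ m` and `R = k[x₁,…,xₙ]`. A Cartier operator on `R` is an additive map `φ` with
`φ (g ^ q * f) = g * φ f`; extracting the coefficients at the exponents congruent to a fixed one
modulo `q` and applying a `q⁻¹`-linear functional `k → k` to them gives such operators, which do not
raise degrees and together separate the points of `R`. Applying all of them turns the equation
`∑ⱼ fⱼ Yⱼ ^ q = h` into the equivalent (possibly infinite) linear system `∑ⱼ φ(fⱼ) Yⱼ = φ(h)`.

By Cramer's rule a solvable linear system in `N₂` unknowns has a solution whose entries are
quotients of minors, of size at most `N₂`, of its augmented matrix. Their degrees are at most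
`N₂ * B`, which is below the bound of the theorem.
-/

open MvPolynomial
open scoped Matrix

/-! ### Cartier operators -/

theorem exists_semilinear_functional_ne_zero {F E : Type*} [Field F] [CommRing E]
    (φ : F →+* E) {a : E} (ha : a ≠ 0) :
    ∃ l : E →+ F, (∀ c x, l (φ c * x) = c * l x) ∧ l a ≠ 0 := by
  let := φ.toAlgebra
  obtain ⟨l, hl⟩ := Module.Projective.exists_dual_ne_zero F ha
  exact ⟨l.toAddMonoidHom, fun c x => l.map_smul c x, hl⟩

theorem nsmul_le_nsmul_add_iff {σ : Type*} {q : ℕ} {e : σ →₀ ℕ} (he : ∀ i, e i < q)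
    {s t : σ →₀ ℕ} : q • t ≤ q • s + e ↔ t ≤ s := by
  refine forall_congr' fun i => ?_
  simp only [Finsupp.smul_apply, Finsupp.add_apply, smul_eq_mul]
  have hei := he i
  constructor <;> intro h
  · by_contra! hlt
    nlinarith
  · nlinarith

section Cartier

variable {σ k : Type*} [CommSemiring k] {q : ℕ}

/-- The map `∑ₜ cₜ xᵗ ↦ ∑ₛ l(c_{qs+e}) xˢ`, the building block of Cartier operators. For `l` the
`q`-th root on a perfect field, with `q` a power of its characteristic, it divides the part of a
polynomial supported on `q ℕ^σ + e` by `xᵉ` and takes the `q`-th root. -/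
noncomputable def cartierMap (hq : q ≠ 0) (l : k →+ k) (e : σ →₀ ℕ) :
    MvPolynomial σ k →+ MvPolynomial σ k :=
  have hinj : Function.Injective fun s : σ →₀ ℕ => q • s + e :=
    (add_left_injective e).comp (nsmul_right_injective hq)
  (AddMonoidAlgebra.coeffAddEquiv.symm.toAddMonoidHom.comp
    ((Finsupp.mapRange.addMonoidHom l).comp (Finsupp.comapDomain.addMonoidHom hinj))).comp
    AddMonoidAlgebra.coeffAddEquiv.toAddMonoidHom

@[simp]
theorem coeff_cartierMap (hq : q ≠ 0) (l : k →+ k) (e s : σ →₀ ℕ) (f : MvPolynomial σ k) :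
    coeff s (cartierMap hq l e f) = l (coeff (q • s + e) f) :=
  rfl

theorem cartierMap_monomial_pow_mul (hq : q ≠ 0) {l : k →+ k}
    (hl : ∀ c x, l (c ^ q * x) = c * l x) {e : σ →₀ ℕ} (he : ∀ i, e i < q) (t : σ →₀ ℕ) (c : k)
    (f : MvPolynomial σ k) :
    cartierMap hq l e (monomial t c ^ q * f) = monomial t c * cartierMap hq l e f := by
  ext s
  rw [coeff_cartierMap, monomial_pow]
  by_cases hts : t ≤ s
  · obtain ⟨r, rfl⟩ := exists_add_of_le hts
    rw [smul_add, add_assoc, coeff_monomial_mul, coeff_monomial_mul, hl, coeff_cartierMap]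
  · rw [coeff_monomial_mul', coeff_monomial_mul', if_neg hts,
      if_neg ((nsmul_le_nsmul_add_iff he).not.2 hts), map_zero]

theorem cartierMap_pow_mul {p m : ℕ} [ExpChar k p] (hq : p ^ m ≠ 0) {l : k →+ k}
    (hl : ∀ c x, l (c ^ p ^ m * x) = c * l x) {e : σ →₀ ℕ} (he : ∀ i, e i < p ^ m)
    (g f : MvPolynomial σ k) :
    cartierMap hq l e (g ^ p ^ m * f) = g * cartierMap hq l e f := by
  induction g using MvPolynomial.induction_on' with
  | monomial t c => exact cartierMap_monomial_pow_mul hq hl he t c f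
  | add g₁ g₂ h₁ h₂ => rw [add_pow_expChar_pow, add_mul, map_add, h₁, h₂, add_mul]

theorem totalDegree_cartierMap_le (hq : q ≠ 0) (l : k →+ k) (e : σ →₀ ℕ) (f : MvPolynomial σ k) :
    (cartierMap hq l e f).totalDegree ≤ f.totalDegree := by
  refine Finset.sup_le fun s hs => ?_
  have hmem : q • s + e ∈ f.support := by
    rw [mem_support_iff, coeff_cartierMap] at hs
    exact mem_support_iff.2 fun h => hs (by rw [h, map_zero])
  calc s.degree ≤ q * s.degree := Nat.le_mul_of_pos_left _ hq.bot_lt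
    _ ≤ (q • s + e).degree := by simp
    _ ≤ f.totalDegree := le_totalDegree hmem

/-- The `q⁻¹`-linear (Cartier) operators on a polynomial ring. That they do not raise total degrees
is made part of the notion. -/
structure IsCartier (q : ℕ) (φ : MvPolynomial σ k →+ MvPolynomial σ k) : Prop where
  map_pow_mul : ∀ g f, φ (g ^ q * f) = g * φ f
  totalDegree_le : ∀ f, (φ f).totalDegree ≤ f.totalDegree

theorem isCartier_cartierMap {p m : ℕ} [ExpChar k p] (hq : p ^ m ≠ 0) {l : k →+ k}
    (hl : ∀ c x, l (c ^ p ^ m * x) = c * l x) {e : σ →₀ ℕ} (he : ∀ i, e i < p ^ m) :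
    IsCartier (p ^ m) (cartierMap hq l e) :=
  ⟨cartierMap_pow_mul hq hl he, totalDegree_cartierMap_le hq l e⟩

end Cartier

section Separation

variable {σ k : Type*} [Field k] (p m : ℕ) [ExpChar k p]

theorem exists_isCartier_ne_zero {f : MvPolynomial σ k} (hf : f ≠ 0) :
    ∃ φ : MvPolynomial σ k →+ MvPolynomial σ k, IsCartier (p ^ m) φ ∧ φ f ≠ 0 := by
  have hq : p ^ m ≠ 0 := (expChar_pow_pos k p m).ne'
  obtain ⟨t, ht⟩ := exists_coeff_ne_zero hf
  obtain ⟨l, hl, hlt⟩ := exists_semilinear_functional_ne_zero (iterateFrobenius k p m) ht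
  let s : σ →₀ ℕ := t.mapRange (· / p ^ m) (Nat.zero_div _)
  let e : σ →₀ ℕ := t.mapRange (· % p ^ m) (Nat.zero_mod _)
  have he : ∀ i, e i < p ^ m := fun i => Nat.mod_lt (t i) hq.bot_lt
  have hse : p ^ m • s + e = t := Finsupp.ext fun i => Nat.div_add_mod (t i) (p ^ m)
  refine ⟨cartierMap hq l e, isCartier_cartierMap hq hl he, ne_zero_iff.2 ⟨s, ?_⟩⟩
  rwa [coeff_cartierMap, hse]

theorem eq_iff_forall_isCartier {f g : MvPolynomial σ k} :
    f = g ↔ ∀ φ, IsCartier (p ^ m) φ → φ f = φ g := by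
  refine ⟨fun h φ _ => congrArg φ h, fun h => ?_⟩
  by_contra hne
  obtain ⟨φ, hφ, hφne⟩ := exists_isCartier_ne_zero p m (sub_ne_zero.2 hne)
  exact hφne (by rw [map_sub, h φ hφ, sub_self])

end Separation

theorem exists_eq_algebraMap_div_algebraMap {R K κ : Type*} [CommRing R] [Nontrivial R] [Field K]
    [Algebra R K] [IsFractionRing R K] [Finite κ] (z : κ → K) :
    ∃ (u : κ → R) (d : R), d ≠ 0 ∧ ∀ j, z j = algebraMap R K (u j) / algebraMap R K d := by
  obtain ⟨d, hd⟩ := IsLocalization.exist_integer_multiples_of_finite (nonZeroDivisors R) z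
  choose u hu using hd
  have hd₀ : (d : R) ≠ 0 := nonZeroDivisors.coe_ne_zero d
  refine ⟨u, d, hd₀, fun j => ?_⟩
  rw [hu, Algebra.smul_def, mul_div_cancel_left₀]
  simp

theorem sum_algebraMap_mul_div_pow_eq_iff {R K κ : Type*} [CommRing R] [Field K] [Algebra R K]
    [FaithfulSMul R K] [Fintype κ] (q : ℕ) (f u : κ → R) (h : R) {d : R} (hd : d ≠ 0) :
    ∑ j, algebraMap R K (f j) * (algebraMap R K (u j) / algebraMap R K d) ^ q =
        algebraMap R K h ↔ ∑ j, u j ^ q * f j = d ^ q * h := by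
  have hd' : algebraMap R K d ^ q ≠ 0 := pow_ne_zero q (by simpa using hd)
  simp only [div_pow, mul_div_assoc', ← Finset.sum_div, div_eq_iff hd']
  simp only [← map_pow, ← map_mul, ← map_sum, (FaithfulSMul.algebraMap_injective R K).eq_iff,
    mul_comm]

theorem frobenius_equation_iff_forall_isCartier {σ k κ K : Type*} [Field k] [Fintype κ] [Field K]
    [Algebra (MvPolynomial σ k) K] [IsFractionRing (MvPolynomial σ k) K] (p m : ℕ) [ExpChar k p]
    (f : κ → MvPolynomial σ k) (h : MvPolynomial σ k) (z : κ → K) :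
    ∑ j, algebraMap (MvPolynomial σ k) K (f j) * z j ^ p ^ m = algebraMap (MvPolynomial σ k) K h ↔
      ∀ φ, IsCartier (p ^ m) φ →
        ∑ j, algebraMap (MvPolynomial σ k) K (φ (f j)) * z j =
          algebraMap (MvPolynomial σ k) K (φ h) := by
  obtain ⟨u, d, hd, hz⟩ := exists_eq_algebraMap_div_algebraMap (R := MvPolynomial σ k) z
  simp only [hz]
  rw [sum_algebraMap_mul_div_pow_eq_iff _ _ _ _ hd, eq_iff_forall_isCartier p m]
  refine forall₂_congr fun φ hφ => ?_
  have hlin := sum_algebraMap_mul_div_pow_eq_iff (K := K) 1 (fun j => φ (f j)) u (φ h) hd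
  simp only [pow_one] at hlin
  simp only [hlin, map_sum, hφ.map_pow_mul]

/-! ### Linear systems over a polynomial ring -/

theorem span_range_row_eq_top {ι τ K : Type*} [Field K] [Finite τ] {A : Matrix ι τ K}
    (hA : LinearIndependent K A.col) : Submodule.span K (Set.range A.row) = ⊤ := by
  classical
  have := Fintype.ofFinite τ
  by_contra hne
  obtain ⟨l, hl, hker⟩ := Submodule.exists_le_ker_of_lt_top _ (lt_top_iff_ne_top.2 hne)
  obtain ⟨w, rfl⟩ := (dotProductEquiv K τ).surjective l
  have hw : A *ᵥ w = A *ᵥ 0 := by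
    rw [Matrix.mulVec_zero]
    ext i
    exact (dotProduct_comm _ _).trans (hker (Submodule.subset_span ⟨i, rfl⟩))
  exact hl (by rw [Matrix.mulVec_injective_iff.2 hA hw, map_zero])

theorem exists_submatrix_det_ne_zero {ι τ K : Type*} [Field K] [Fintype τ] [DecidableEq τ]
    {A : Matrix ι τ K} (hA : LinearIndependent K A.col) :
    ∃ rows : τ → ι, (A.submatrix rows id).det ≠ 0 := by
  obtain ⟨κ, r, -, hspan, hr⟩ := exists_linearIndependent' K A.row
  rw [span_range_row_eq_top hA] at hspan
  let e := (Pi.basisFun K τ).indexEquiv (.mk hr hspan.ge)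
  refine ⟨r ∘ e, IsUnit.ne_zero ?_⟩
  rw [← Matrix.isUnit_iff_isUnit_det, ← Matrix.linearIndependent_rows_iff_isUnit]
  exact hr.comp e e.injective

theorem cramer_mulVec {n R : Type*} [CommRing R] [Fintype n] [DecidableEq n] (A : Matrix n n R)
    (x : n → R) : A.cramer (A *ᵥ x) = A.det • x := by
  rw [Matrix.cramer_eq_adjugate_mulVec, Matrix.mulVec_mulVec, Matrix.adjugate_mul,
    Matrix.smul_mulVec, Matrix.one_mulVec]

theorem comp_cramer {n R S : Type*} [CommRing R] [CommRing S] [Fintype n] [DecidableEq n]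
    (φ : R →+* S) (A : Matrix n n R) (b : n → R) :
    φ ∘ A.cramer b = (A.map φ).cramer (φ ∘ b) := by
  ext i
  simp [Matrix.cramer_apply, RingHom.map_det, Matrix.map_updateCol]

theorem exists_finset_linearIndepOn_col_mulVec_eq {ι κ K : Type*} [Field K] [Fintype κ]
    (A : Matrix ι κ K) (x : κ → K) :
    ∃ (s : Finset κ) (y : s → K), LinearIndepOn K A.col s ∧ A.submatrix id (↑) *ᵥ y = A *ᵥ x := by
  obtain ⟨s, -, -, hspan, hs⟩ :=
    exists_linearIndepOn_extension (linearIndepOn_empty K A.col) (Set.subset_univ ∅)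
  lift s to Finset κ using s.toFinite
  have hx : A *ᵥ x ∈ Submodule.span K (A.col '' s) := by
    refine Submodule.span_le.2 hspan ?_
    rw [Set.image_univ, ← Matrix.range_mulVecLin]
    exact LinearMap.mem_range_self A.mulVecLin x
  have hsub : A.col '' s = Set.range (A.submatrix id ((↑) : s → κ)).col := Set.image_eq_range ..
  rw [hsub, ← Matrix.range_mulVecLin] at hx
  obtain ⟨y, hy⟩ := hx
  exact ⟨s, y, hs, hy⟩

-- The system may consist of infinitely many equations; some of them already determine the values of
-- finitely many unknowns with independent columns, the other unknowns being set to zero.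
theorem exists_cramer_solution {R K ι κ : Type*} [CommRing R] [Field K] [Algebra R K]
    [FaithfulSMul R K] [Fintype κ] [DecidableEq κ] {G : Matrix ι κ R} {H : ι → R} {x : κ → K}
    (hx : G.map (algebraMap R K) *ᵥ x = algebraMap R K ∘ H) :
    ∃ (s : Finset κ) (rows : s → ι), (G.submatrix rows (↑)).det ≠ 0 ∧
      G.submatrix id (↑) *ᵥ (G.submatrix rows (↑)).cramer (H ∘ rows) =
        (G.submatrix rows (↑)).det • H := by
  obtain ⟨s, y, hs, hy⟩ := exists_finset_linearIndepOn_col_mulVec_eq (G.map (algebraMap R K)) x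
  obtain ⟨rows, hrows⟩ :=
    exists_submatrix_det_ne_zero (A := (G.map (algebraMap R K)).submatrix id ((↑) : s → κ)) hs
  let M := G.submatrix rows ((↑) : s → κ)
  have hM : algebraMap R K M.det = (M.map (algebraMap R K)).det := RingHom.map_det ..
  have hMy : M.map (algebraMap R K) *ᵥ y = algebraMap R K ∘ H ∘ rows :=
    funext fun t => congrFun (hy.trans hx) (rows t)
  have hcramer : algebraMap R K ∘ M.cramer (H ∘ rows) = algebraMap R K M.det • y := by
    rw [comp_cramer, ← hMy, cramer_mulVec, hM]
  refine ⟨s, rows, fun h => hrows (hM.symm.trans (by rw [h, map_zero])), funext fun i =>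
    FaithfulSMul.algebraMap_injective R K ?_⟩
  rw [RingHom.map_mulVec, hcramer, Matrix.mulVec_smul, ← Matrix.submatrix_map, hy, hx]
  simp [M]

theorem mulVec_extend_zero {ι κ τ R : Type*} [NonUnitalNonAssocSemiring R] [Fintype κ] [Fintype τ]
    (A : Matrix ι κ R) {e : τ → κ} (he : e.Injective) (y : τ → R) :
    A *ᵥ Function.extend e y 0 = A.submatrix id e *ᵥ y := by
  ext i
  refine (Fintype.sum_of_injective e he _ _ ?_ ?_).symm
  · intro j hj
    rw [Function.extend_apply' _ _ _ hj, Pi.zero_apply, mul_zero]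
  · intro t
    simp only [he.extend_apply, Matrix.submatrix_apply, id_eq]

theorem map_mulVec_div_eq {R K ι κ : Type*} [CommRing R] [Field K] [Algebra R K]
    [FaithfulSMul R K] [Fintype κ] {G : Matrix ι κ R} {H : ι → R} {a : κ → R} {b : R} (hb : b ≠ 0)
    (hab : G *ᵥ a = b • H) :
    G.map (algebraMap R K) *ᵥ (fun j => algebraMap R K (a j) / algebraMap R K b) =
      algebraMap R K ∘ H := by
  have hb' : algebraMap R K b ≠ 0 := by simpa using hb
  have hdiv : (fun j => algebraMap R K (a j) / algebraMap R K b) =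
      (algebraMap R K b)⁻¹ • algebraMap R K ∘ a := funext fun j => div_eq_inv_mul _ _
  rw [hdiv, Matrix.mulVec_smul, inv_smul_eq_iff₀ hb']
  ext i
  rw [← RingHom.map_mulVec, hab]
  simp

theorem totalDegree_det_le {σ k n : Type*} [CommRing k] [Fintype n] [DecidableEq n] {B : ℕ}
    {M : Matrix n n (MvPolynomial σ k)} (hM : ∀ i j, (M i j).totalDegree ≤ B) :
    M.det.totalDegree ≤ Fintype.card n * B := by
  rw [Matrix.det_apply]
  refine totalDegree_finsetSum_le fun τ _ => (totalDegree_smul_le _ _).trans ?_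
  calc (∏ i, M (τ i) i).totalDegree
    _ ≤ ∑ i, (M (τ i) i).totalDegree := totalDegree_finsetProd _ _
    _ ≤ ∑ _ : n, B := Finset.sum_le_sum fun i _ => hM (τ i) i
    _ = Fintype.card n * B := by simp

theorem totalDegree_cramer_le {σ k n : Type*} [CommRing k] [Fintype n] [DecidableEq n] {B : ℕ}
    {M : Matrix n n (MvPolynomial σ k)} {b : n → MvPolynomial σ k}
    (hM : ∀ i j, (M i j).totalDegree ≤ B) (hb : ∀ i, (b i).totalDegree ≤ B) (j : n) :
    (M.cramer b j).totalDegree ≤ Fintype.card n * B := by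
  rw [Matrix.cramer_apply]
  refine totalDegree_det_le fun i i' => ?_
  rw [Matrix.updateCol_apply]
  split_ifs
  exacts [hb i, hM i i']

theorem exists_totalDegree_le_of_linear_system {σ k ι κ K : Type*} [CommRing k] [Field K]
    [Algebra (MvPolynomial σ k) K] [FaithfulSMul (MvPolynomial σ k) K] [Fintype κ] {B : ℕ}
    {G : Matrix ι κ (MvPolynomial σ k)} {H : ι → MvPolynomial σ k}
    (hG : ∀ i j, (G i j).totalDegree ≤ B) (hH : ∀ i, (H i).totalDegree ≤ B) {x : κ → K}
    (hx : G.map (algebraMap (MvPolynomial σ k) K) *ᵥ x = algebraMap (MvPolynomial σ k) K ∘ H) :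
    ∃ (a : κ → MvPolynomial σ k) (b : MvPolynomial σ k), b ≠ 0 ∧
      (∀ j, (a j).totalDegree ≤ Fintype.card κ * B) ∧ b.totalDegree ≤ Fintype.card κ * B ∧
      G.map (algebraMap (MvPolynomial σ k) K) *ᵥ
          (fun j => algebraMap (MvPolynomial σ k) K (a j) / algebraMap (MvPolynomial σ k) K b) =
        algebraMap (MvPolynomial σ k) K ∘ H := by
  classical
  obtain ⟨s, rows, hdet, hsol⟩ := exists_cramer_solution hx
  have hcard : Fintype.card s * B ≤ Fintype.card κ * B :=
    Nat.mul_le_mul_right B (Fintype.card_subtype_le _)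
  have hminor := fun t (j : s) => hG (rows t) j
  refine ⟨Function.extend (↑) ((G.submatrix rows (↑)).cramer (H ∘ rows)) 0, _, hdet, fun j => ?_,
    (totalDegree_det_le hminor).trans hcard, ?_⟩
  · by_cases hj : ∃ t : s, t = j
    · obtain ⟨t, rfl⟩ := hj
      rw [Subtype.val_injective.extend_apply]
      exact (totalDegree_cramer_le hminor (fun t => hH (rows t)) t).trans hcard
    · simp [Function.extend_apply' _ _ _ hj]
  · refine map_mulVec_div_eq hdet ?_
    rw [mulVec_extend_zero G Subtype.val_injective, hsol]

/-! ### Frobenius systems -/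

theorem frobenius_system_over_function_field_bounded_solution_general {σ k ι κ K : Type*} [Field k]
    [Fintype κ] [Field K] [Algebra (MvPolynomial σ k) K] [IsFractionRing (MvPolynomial σ k) K]
    (p m : ℕ) [ExpChar k p] {B : ℕ} {f : ι → κ → MvPolynomial σ k} {h : ι → MvPolynomial σ k}
    (hf : ∀ i j, (f i j).totalDegree ≤ B) (hh : ∀ i, (h i).totalDegree ≤ B)
    (hsol : ∃ z : κ → K, ∀ i, ∑ j, algebraMap (MvPolynomial σ k) K (f i j) * z j ^ p ^ m =
      algebraMap (MvPolynomial σ k) K (h i)) :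
    ∃ (a : κ → MvPolynomial σ k) (b : MvPolynomial σ k), b ≠ 0 ∧
      (∀ j, (a j).totalDegree ≤ Fintype.card κ * B) ∧ b.totalDegree ≤ Fintype.card κ * B ∧
      ∀ i, ∑ j, algebraMap (MvPolynomial σ k) K (f i j) *
          (algebraMap (MvPolynomial σ k) K (a j) / algebraMap (MvPolynomial σ k) K b) ^ p ^ m =
        algebraMap (MvPolynomial σ k) K (h i) := by
  simp only [frobenius_equation_iff_forall_isCartier] at hsol ⊢
  obtain ⟨z, hz⟩ := hsol
  let G : Matrix (ι × {φ : MvPolynomial σ k →+ MvPolynomial σ k // IsCartier (p ^ m) φ}) κ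
      (MvPolynomial σ k) := .of fun r j => r.2.1 (f r.1 j)
  obtain ⟨a, b, hb, ha, hbB, hab⟩ := exists_totalDegree_le_of_linear_system (G := G)
    (H := fun r => r.2.1 (h r.1)) (fun r j => (r.2.2.totalDegree_le _).trans (hf r.1 j))
    (fun r => (r.2.2.totalDegree_le _).trans (hh r.1)) (funext fun r => hz r.1 r.2.1 r.2.2)
  exact ⟨a, b, hb, ha, hbB, fun i φ hφ => congrFun hab (i, ⟨φ, hφ⟩)⟩

/-- In characteristic `p`, if the system `∑ⱼ f_{ij}·Yⱼ^(p^m) = hᵢ` over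
`k[x₁,…,xₙ]` has a solution in `k(x₁,…,xₙ)`, then it has a solution whose entries are
ratios of polynomials of total degree at most
`(2·N₁²·(N₂+1)·C(B+n,n)·p^(m(n−1))·B)^(2^n)`. -/
theorem frobenius_system_over_function_field_bounded_solution
    (p : ℕ) (hp : p.Prime) (k : Type*) [Field k] [CharP k p]
    (m n N₁ N₂ B : ℕ)
    (f : Fin N₁ → Fin N₂ → MvPolynomial (Fin n) k)
    (h : Fin N₁ → MvPolynomial (Fin n) k)
    (hf : ∀ i j, (f i j).totalDegree ≤ B)
    (hh : ∀ i, (h i).totalDegree ≤ B)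
    (hsol : ∃ z : Fin N₂ → FractionRing (MvPolynomial (Fin n) k),
      ∀ i, ∑ j, algebraMap (MvPolynomial (Fin n) k)
          (FractionRing (MvPolynomial (Fin n) k)) (f i j) * z j ^ p ^ m =
        algebraMap (MvPolynomial (Fin n) k)
          (FractionRing (MvPolynomial (Fin n) k)) (h i)) :
    ∃ y : Fin N₂ → FractionRing (MvPolynomial (Fin n) k),
      (∀ i, ∑ j, algebraMap (MvPolynomial (Fin n) k)
          (FractionRing (MvPolynomial (Fin n) k)) (f i j) * y j ^ p ^ m =
        algebraMap (MvPolynomial (Fin n) k)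
          (FractionRing (MvPolynomial (Fin n) k)) (h i)) ∧
      ∀ j, ∃ a b : MvPolynomial (Fin n) k, b ≠ 0 ∧
        a.totalDegree ≤
          (2 * N₁ ^ 2 * (N₂ + 1) * Nat.choose (B + n) n * p ^ (m * (n - 1)) * B) ^ 2 ^ n ∧
        b.totalDegree ≤
          (2 * N₁ ^ 2 * (N₂ + 1) * Nat.choose (B + n) n * p ^ (m * (n - 1)) * B) ^ 2 ^ n ∧
        y j = algebraMap (MvPolynomial (Fin n) k)
            (FractionRing (MvPolynomial (Fin n) k)) a /
          algebraMap (MvPolynomial (Fin n) k)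
            (FractionRing (MvPolynomial (Fin n) k)) b := by
  have : Fact p.Prime := ⟨hp⟩
  have hbound : Fintype.card (Fin N₂) * (N₁ * B) ≤
      (2 * N₁ ^ 2 * (N₂ + 1) * Nat.choose (B + n) n * p ^ (m * (n - 1)) * B) ^ 2 ^ n := by
    have hchoose : 0 < Nat.choose (B + n) n := Nat.choose_pos (Nat.le_add_left n B)
    have hsq : N₁ ≤ N₁ ^ 2 := Nat.le_self_pow two_ne_zero N₁
    have hpow : 0 < p ^ (m * (n - 1)) := pow_pos hp.pos _
    calc Fintype.card (Fin N₂) * (N₁ * B)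
      _ = 1 * N₁ * N₂ * 1 * 1 * B := by rw [Fintype.card_fin]; ring
      _ ≤ 2 * N₁ ^ 2 * (N₂ + 1) * Nat.choose (B + n) n * p ^ (m * (n - 1)) * B := by
        gcongr <;> omega
      _ ≤ _ := Nat.le_self_pow (pow_ne_zero n two_ne_zero) _
  -- Relaxing `B` to `N₁ * B` covers the case `N₁ = 0`, where the bound to be reached is `0`.
  obtain ⟨a, b, hb, ha, hbB, hab⟩ :=
    frobenius_system_over_function_field_bounded_solution_general (B := N₁ * B) p m
      (fun i j => (hf i j).trans (Nat.le_mul_of_pos_left B i.pos))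
      (fun i => (hh i).trans (Nat.le_mul_of_pos_left B i.pos)) hsol
  exact ⟨_, hab, fun j => ⟨a j, b, hb, (ha j).trans hbound, hbB.trans hbound, rfl⟩⟩
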